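/- (Carne–Varopoulos bound for continuous-time walks with dominating speed measure.) Let C be a countable connected graph with conductances ω, let μ^ω(x) = ∑_{y∼x} ω({x,y}), and let θ : C → (0,∞) satisfy θ ≥ μ^ω. Let Y be the continuous-time Markov chain with generator L^ω_θ f(x) = θ(x)^{-1} ∑_{y∼x} ω(x,y)(f(y)-f(x)). Then there exists c > 0 such that for all x, y with graph distance d^ω(x,y) ≥ 1 and all t > 0: if et ≥ d^ω(x,y), then P_x[Y_t = y]/θ(y) ≤ (4/√(θ(x)θ(y))) exp(-d^ω(x,y)²/(e² t)); and if et ≤ d^ω(x,y), then P_x[Y_t = y]/θ(y) ≤ (1/(θ(x) ∨ θ(y))) exp(-c d^ω(x,y) (1 ∨ log(d^ω(x,y)/t))). -/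

import Mathlib

/-!
The kernel `P` is substochastic and reversible with respect to `θ`, and it moves by at most one
unit of graph distance per step. Write `d` for the distance from `x` to `y`.

For `d ≤ et` the bound comes from Davies' perturbation method, applied directly in continuous time
instead of through the discrete Carne–Varopoulos bound. With `φ = dist x ·`, conjugating `P` by
the weight `√θ e^{-sφ}` gives an operator whose quadratic form is at most `cosh s` times the
squared `ℓ²` norm (`quadratic_form_le`): the conjugated kernel has symmetric part
`cosh (s (φ i - φ j))` times the symmetrized kernel, and `|φ i - φ j| ≤ 1` along edges. Its
exponential therefore has norm at most `e^{t cosh s}` (`norm_exp_smul_apply_le`), and reading off a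
matrix entry gives `P_x[Y_t = y] ≤ √(θ y / θ x) e^{-sd + t (cosh s - 1)}` (`heatKer_le_davies`).
The operator argument is carried out for the restrictions of `P` to finite sets, whose iterates
converge to those of `P` (`tendsto_kernelPow_trunc`). The choice `s = d / (2t)` suffices
(`davies_exponent_le`).

For `et ≤ d`, since `Pⁿ(x, y) ≤ 1` and `Pⁿ(x, y) = 0` for `n < d`, the transition probability is at
most the probability that a Poisson variable of mean `t` is at least `d`, and the Chernoff bound with
ratio `r = d / t` gives the exponent (`heatKer_le_chernoff`, `chernoff_le`) with `c = e⁻¹`. The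
maximum of `θ x` and `θ y` is reached because `P_x[Y_t = y] / θ y` is symmetric in `x` and `y`
(`heatKer_reversible`).
-/

open scoped Classical

/-- `n`-step kernel of a discrete-time transition kernel `P` on a countable state space. -/
noncomputable def kernelPow {V : Type*} (P : V → V → ℝ) : ℕ → V → V → ℝ
  | 0 => fun x y => if x = y then 1 else 0
  | n + 1 => fun x y => ∑' z, kernelPow P n x z * P z y

/-- Transition probabilities of the continuous-time chain with jump kernel `P`:
`P_x[Y_t = y] = ∑_n e^{-t} t^n/n! Pⁿ(x,y)`. -/
noncomputable def heatKer {V : Type*} (P : V → V → ℝ) (t : ℝ) (x y : V) : ℝ :=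
  ∑' n : ℕ, Real.exp (-t) * t ^ n / (Nat.factorial n : ℝ) * kernelPow P n x y

/-! ### Growth of matrix exponentials -/

/-- An operator whose quadratic form is at most `c‖v‖²` generates a semigroup of growth `e^{ct}`:
`‖e^{tB} v‖² e^{-2ct}` has nonpositive derivative. -/
lemma norm_exp_smul_apply_le {E : Type*} [NormedAddCommGroup E] [InnerProductSpace ℝ E]
    [CompleteSpace E] (B : E →L[ℝ] E) (c : ℝ) (hB : ∀ v, inner ℝ v (B v) ≤ c * ‖v‖ ^ 2)
    (v : E) {t : ℝ} (ht : 0 ≤ t) :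
    ‖NormedSpace.exp (t • B) v‖ ≤ Real.exp (c * t) * ‖v‖ := by
  have hd : ∀ u : ℝ, HasDerivAt (fun u : ℝ => NormedSpace.exp (u • B) v)
      (B (NormedSpace.exp (u • B) v)) u := by
    intro u
    have h := (hasDerivAt_exp_smul_const' (𝕂 := ℝ) B u).clm_apply (hasDerivAt_const u v)
    simpa using h
  have hd2 : ∀ u : ℝ, HasDerivAt
      (fun u : ℝ => ‖NormedSpace.exp (u • B) v‖ ^ 2 * Real.exp (-(2 * c) * u))
      ((2 * inner ℝ (NormedSpace.exp (u • B) v) (B (NormedSpace.exp (u • B) v))) *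
        Real.exp (-(2 * c) * u) +
        ‖NormedSpace.exp (u • B) v‖ ^ 2 * (Real.exp (-(2 * c) * u) * (-(2 * c)))) u := by
    intro u
    have h2 : HasDerivAt (fun u : ℝ => Real.exp (-(2 * c) * u))
        (Real.exp (-(2 * c) * u) * (-(2 * c))) u := by
      simpa using ((hasDerivAt_id u).const_mul (-(2 * c))).exp
    exact (hd u).norm_sq.mul h2
  have hanti : Antitone
      (fun u : ℝ => ‖NormedSpace.exp (u • B) v‖ ^ 2 * Real.exp (-(2 * c) * u)) := by
    apply antitone_of_deriv_nonpos
    · exact fun u => (hd2 u).differentiableAt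
    · intro u
      rw [(hd2 u).deriv]
      have h1 := hB (NormedSpace.exp (u • B) v)
      have h2 := Real.exp_pos (-(2 * c) * u)
      nlinarith
  have h := hanti ht
  simp only [zero_smul, NormedSpace.exp_zero, mul_zero, Real.exp_zero, mul_one,
    one_apply_eq_self] at h
  have hE : Real.exp (-(2 * c) * t) * (Real.exp (c * t)) ^ 2 = 1 := by
    rw [sq, ← Real.exp_add, ← Real.exp_add]
    simp; ring
  apply le_of_sq_le_sq _ (by positivity)
  calc _ = (‖NormedSpace.exp (t • B) v‖ ^ 2 * Real.exp (-(2 * c) * t)) *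
        (Real.exp (c * t)) ^ 2 := by rw [mul_assoc, hE, mul_one]
    _ ≤ ‖v‖ ^ 2 * (Real.exp (c * t)) ^ 2 := by gcongr
    _ = _ := by ring

lemma clm_smul_pow {E : Type*} [NormedAddCommGroup E] [NormedSpace ℝ E] (T : E →L[ℝ] E) (t : ℝ)
    (n : ℕ) : (t • T) ^ n = t ^ n • T ^ n := smul_pow t T n

/-- If the quadratic form of `B` is at most `c‖f‖²`, the entries of `e^{tB}` are at most `e^{ct}`.
Nonnegativity of the terms makes every partial sum of the exponential series obey the bound. -/
lemma matrix_exp_entry_le {ι : Type*} [Fintype ι] [DecidableEq ι] (B : Matrix ι ι ℝ) (c : ℝ)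
    (hB : ∀ f : ι → ℝ, ∑ i, ∑ j, f i * B i j * f j ≤ c * ∑ i, f i ^ 2)
    {t : ℝ} (ht : 0 ≤ t) (x y : ι) (N : ℕ) (hnn : ∀ n, 0 ≤ (B ^ n) x y) :
    ∑ n ∈ Finset.range N, t ^ n / (n.factorial : ℝ) * (B ^ n) x y ≤ Real.exp (c * t) := by
  set T := Matrix.toEuclideanCLM (𝕜 := ℝ) B with hT
  have hq : ∀ v, inner ℝ v (T v) ≤ c * ‖v‖ ^ 2 := by
    intro v
    have := hB v
    rw [EuclideanSpace.norm_sq_eq, PiLp.inner_apply]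
    refine le_trans (le_of_eq ?_) (this.trans (le_of_eq (by simp)))
    refine Finset.sum_congr rfl fun i _ => ?_
    simp only [hT, Matrix.ofLp_toEuclideanCLM, Matrix.mulVec, dotProduct, RCLike.inner_apply,
      conj_trivial, Finset.sum_mul]
    exact Finset.sum_congr rfl fun j _ => by ring
  have hb := norm_exp_smul_apply_le T c hq (EuclideanSpace.single y 1) ht
  have hs : HasSum (fun n : ℕ => ((n.factorial : ℝ)⁻¹ • (t • T) ^ n))
      (NormedSpace.exp (t • T)) := NormedSpace.exp_series_hasSum_exp' (𝕂 := ℝ) (t • T)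
  have hs2 : HasSum (fun n : ℕ => t ^ n / (n.factorial : ℝ) * (B ^ n) x y)
      (NormedSpace.exp (t • T) (EuclideanSpace.single y 1) x) := by
    have h := (hs.mapL ((EuclideanSpace.proj (𝕜 := ℝ) x).comp
      (ContinuousLinearMap.apply ℝ _ (EuclideanSpace.single y (1 : ℝ)))))
    refine (congrArg (HasSum · _) (funext fun n => ?_)).mp h
    have hpow : (t • T) ^ n = t ^ n • Matrix.toEuclideanCLM (𝕜 := ℝ) (B ^ n) := by
      rw [map_pow]
      exact clm_smul_pow T t n
    rw [hpow]
    generalize B ^ n = C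
    simp [Matrix.ofLp_toEuclideanCLM]
    ring
  have hcoord := PiLp.norm_apply_le (NormedSpace.exp (t • T) (EuclideanSpace.single y 1)) x
  rw [Real.norm_eq_abs] at hcoord
  calc _ ≤ NormedSpace.exp (t • T) (EuclideanSpace.single y 1) x :=
        sum_le_hasSum _ (fun n _ => mul_nonneg (by positivity) (hnn n)) hs2
    _ ≤ ‖NormedSpace.exp (t • T) (EuclideanSpace.single y 1)‖ :=
        (le_abs_self _).trans hcoord
    _ ≤ _ := by simpa using hb

/-! ### Davies' method on a finite state space -/

/-- Powers commute with conjugation by the diagonal matrix `diag g`. -/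
lemma conj_pow_entry {ι : Type*} [Fintype ι] [DecidableEq ι] (M : Matrix ι ι ℝ) (g : ι → ℝ)
    (hg : ∀ i, 0 < g i) (n : ℕ) (x y : ι) :
    ((Matrix.of fun i j => g i * M i j / g j) ^ n) x y = g x * (M ^ n) x y / g y := by
  induction n generalizing y with
  | zero =>
    by_cases h : x = y
    · subst h; simp [(hg x).ne']
    · simp [h]
  | succ n ih =>
    rw [pow_succ, pow_succ, Matrix.mul_apply, Matrix.mul_apply, Finset.mul_sum, Finset.sum_div]
    refine Finset.sum_congr rfl fun z _ => ?_
    rw [ih, Matrix.of_apply]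
    have := (hg z).ne'
    have := (hg y).ne'
    field_simp

/-- Detailed balance says that conjugation by `diag θ` transposes `M`; hence so for its powers. -/
lemma reversible_pow {ι : Type*} [Fintype ι] [DecidableEq ι] (M : Matrix ι ι ℝ) (θ : ι → ℝ)
    (hθ : ∀ i, 0 < θ i) (hrev : ∀ i j, θ i * M i j = θ j * M j i) (n : ℕ) (x y : ι) :
    θ x * (M ^ n) x y = θ y * (M ^ n) y x := by
  have h1 := conj_pow_entry M θ hθ n x y
  have h2 : (Matrix.of fun i j => θ i * M i j / θ j) = M.transpose := by
    ext i j
    have := (hθ j).ne'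
    simp only [Matrix.of_apply, Matrix.transpose_apply, hrev i j]
    field_simp
  rw [h2, ← Matrix.transpose_pow, Matrix.transpose_apply] at h1
  have := (hθ y).ne'
  rw [h1]; field_simp

/-- Quadratic form of the kernel conjugated by the weight `√θ e^{-sφ}`. Its symmetric part is the
`ℓ²`-symmetrization of `M` times `cosh (s (φ i - φ j))`, which is at most `cosh s` along edges. -/
lemma quadratic_form_le {ι : Type*} [Fintype ι] (M : Matrix ι ι ℝ)
    (θ φ : ι → ℝ) (s : ℝ) (hθ : ∀ i, 0 < θ i) (hM : ∀ i j, 0 ≤ M i j)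
    (hrev : ∀ i j, θ i * M i j = θ j * M j i) (hrow : ∀ i, ∑ j, M i j ≤ 1)
    (hφ : ∀ i j, M i j ≠ 0 → |φ i - φ j| ≤ 1) (f : ι → ℝ) :
    ∑ i, ∑ j, f i * ((√(θ i) * Real.exp (-s * φ i)) * M i j /
      (√(θ j) * Real.exp (-s * φ j))) * f j ≤ Real.cosh s * ∑ i, f i ^ 2 := by
  set B : ι → ι → ℝ := fun i j => (√(θ i) * Real.exp (-s * φ i)) * M i j /
      (√(θ j) * Real.exp (-s * φ j)) with hBdef
  have key : ∀ i j, f i * B i j * f j + f j * B j i * f i ≤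
      Real.cosh s * (f i ^ 2 * M i j + f j ^ 2 * M j i) := by
    intro i j
    set a := √(θ i) with ha
    set b := √(θ j) with hb
    have ha0 : 0 < a := Real.sqrt_pos.2 (hθ i)
    have hb0 : 0 < b := Real.sqrt_pos.2 (hθ j)
    have ha2 : a ^ 2 = θ i := Real.sq_sqrt (hθ i).le
    have hb2 : b ^ 2 = θ j := Real.sq_sqrt (hθ j).le
    -- `m` is the common value of `M i j / θ j` and `M j i / θ i`.
    obtain ⟨m, hm1, hm2⟩ : ∃ m, M i j = b ^ 2 * m ∧ M j i = a ^ 2 * m := by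
      refine ⟨M i j / b ^ 2, by field_simp, ?_⟩
      have := hrev i j
      rw [← ha2, ← hb2] at this
      field_simp
      linarith
    have hm0 : 0 ≤ m := by
      have := hM i j
      rw [hm1] at this
      exact nonneg_of_mul_nonneg_right this (by positivity)
    have hB1 : B i j = a * b * m * Real.exp (s * (φ j - φ i)) := by
      have : Real.exp (s * (φ j - φ i)) = Real.exp (-s * φ i) / Real.exp (-s * φ j) := by
        rw [← Real.exp_sub]; ring_nf
      simp only [hBdef, this, hm1, ← ha, ← hb]
      have := (Real.exp_pos (-s * φ j)).ne'
      field_simp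
    have hB2 : B j i = a * b * m * Real.exp (-(s * (φ j - φ i))) := by
      have : Real.exp (-(s * (φ j - φ i))) = Real.exp (-s * φ j) / Real.exp (-s * φ i) := by
        rw [← Real.exp_sub]; ring_nf
      simp only [hBdef, this, hm2, ← ha, ← hb]
      have := (Real.exp_pos (-s * φ i)).ne'
      field_simp
    have hsum : f i * B i j * f j + f j * B j i * f i =
        2 * Real.cosh (s * (φ j - φ i)) * ((b * f i) * (a * f j) * m) := by
      rw [hB1, hB2, Real.cosh_eq]; ring
    have hcosh : Real.cosh (s * (φ j - φ i)) * m ≤ Real.cosh s * m := by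
      rcases eq_or_ne (M i j) 0 with h0 | h0
      · have : m = 0 := by
          rw [hm1] at h0
          rcases mul_eq_zero.1 h0 with h | h
          · exact absurd h (by positivity)
          · exact h
        simp [this]
      · refine mul_le_mul_of_nonneg_right ?_ hm0
        rw [Real.cosh_le_cosh, abs_mul, abs_sub_comm]
        exact mul_le_of_le_one_right (abs_nonneg _) (hφ i j h0)
    have hc0 := Real.cosh_pos (s * (φ j - φ i))
    rw [hsum, hm1, hm2]
    calc _ = (Real.cosh (s * (φ j - φ i)) * m) * (2 * (b * f i) * (a * f j)) := by ring
      _ ≤ (Real.cosh (s * (φ j - φ i)) * m) * ((b * f i) ^ 2 + (a * f j) ^ 2) := by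
          refine mul_le_mul_of_nonneg_left ?_ (by positivity)
          nlinarith [sq_nonneg (b * f i - a * f j)]
      _ ≤ (Real.cosh s * m) * ((b * f i) ^ 2 + (a * f j) ^ 2) := by gcongr
      _ = _ := by ring
  have h1 : ∑ i, ∑ j, (f i * B i j * f j + f j * B j i * f i) =
      2 * ∑ i, ∑ j, f i * B i j * f j := by
    simp only [Finset.sum_add_distrib]
    rw [Finset.sum_comm (f := fun i j => f j * B j i * f i)]
    ring
  have h2 : ∑ i, ∑ j, Real.cosh s * (f i ^ 2 * M i j + f j ^ 2 * M j i) =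
      2 * (Real.cosh s * ∑ i, f i ^ 2 * ∑ j, M i j) := by
    simp only [← Finset.mul_sum, Finset.sum_add_distrib]
    rw [Finset.sum_comm (f := fun i j => f j ^ 2 * M j i)]
    simp only [← Finset.mul_sum]
    ring
  have h3 := Finset.sum_le_sum fun i (_ : i ∈ Finset.univ) =>
    Finset.sum_le_sum fun j (_ : j ∈ Finset.univ) => key i j
  rw [h1, h2] at h3
  have h4 : ∑ i, f i ^ 2 * ∑ j, M i j ≤ ∑ i, f i ^ 2 :=
    Finset.sum_le_sum fun i _ => mul_le_of_le_one_right (sq_nonneg _) (hrow i)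
  have h5 := mul_le_mul_of_nonneg_left h4 (Real.cosh_pos s).le
  linarith

lemma pow_entry_nonneg {ι : Type*} [Fintype ι] [DecidableEq ι] (M : Matrix ι ι ℝ)
    (hM : ∀ i j, 0 ≤ M i j) (n : ℕ) (x y : ι) : 0 ≤ (M ^ n) x y := by
  induction n generalizing y with
  | zero => rw [pow_zero, Matrix.one_apply]; split_ifs <;> norm_num
  | succ n ih =>
    rw [pow_succ, Matrix.mul_apply]
    exact Finset.sum_nonneg fun z _ => mul_nonneg (ih z) (hM z y)

/-- Davies' bound on a finite state space, for partial sums of the exponential series. -/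
lemma davies_finite {ι : Type*} [Fintype ι] [DecidableEq ι] (M : Matrix ι ι ℝ)
    (θ φ : ι → ℝ) (s : ℝ) (hθ : ∀ i, 0 < θ i) (hM : ∀ i j, 0 ≤ M i j)
    (hrev : ∀ i j, θ i * M i j = θ j * M j i) (hrow : ∀ i, ∑ j, M i j ≤ 1)
    (hφ : ∀ i j, M i j ≠ 0 → |φ i - φ j| ≤ 1) {t : ℝ} (ht : 0 ≤ t) (x y : ι) (N : ℕ) :
    ∑ n ∈ Finset.range N, t ^ n / (n.factorial : ℝ) * (M ^ n) x y ≤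
      √(θ y) / √(θ x) * Real.exp (s * (φ x - φ y)) * Real.exp (Real.cosh s * t) := by
  set g : ι → ℝ := fun i => √(θ i) * Real.exp (-s * φ i) with hg
  have hg0 : ∀ i, 0 < g i := fun i => mul_pos (Real.sqrt_pos.2 (hθ i)) (Real.exp_pos _)
  have h := matrix_exp_entry_le (Matrix.of fun i j => g i * M i j / g j) (Real.cosh s)
    (fun f => by simpa [hg] using quadratic_form_le M θ φ s hθ hM hrev hrow hφ f) ht x y N
    (fun n => pow_entry_nonneg _ (fun i j => by
      have := hM i j; have := hg0 i; have := hg0 j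
      simp only [Matrix.of_apply]; positivity) n x y)
  simp only [conj_pow_entry M g hg0] at h
  have hgg : √(θ y) / √(θ x) * Real.exp (s * (φ x - φ y)) = g y / g x := by
    have : Real.exp (s * (φ x - φ y)) = Real.exp (-s * φ y) / Real.exp (-s * φ x) := by
      rw [← Real.exp_sub]; ring_nf
    rw [this, hg]; field_simp
  rw [hgg]
  have hx := hg0 x
  have hy := hg0 y
  calc _ = g y / g x * ∑ n ∈ Finset.range N, t ^ n / (n.factorial : ℝ) *
        (g x * (M ^ n) x y / g y) := by
        rw [Finset.mul_sum]
        exact Finset.sum_congr rfl fun n _ => by field_simp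
    _ ≤ _ := by gcongr

/-! ### Iterates of a substochastic kernel and their finite truncations -/

section Kernel

variable {V : Type*} {P : V → V → ℝ}

lemma kernelPow_nonneg (hP : ∀ x y, 0 ≤ P x y) (n : ℕ) (x y : V) : 0 ≤ kernelPow P n x y := by
  induction n generalizing y with
  | zero => simp only [kernelPow]; split_ifs <;> norm_num
  | succ n ih => exact tsum_nonneg fun z => mul_nonneg (ih z) (hP z y)

/-- Iterates of a substochastic kernel are substochastic. Row sums are bounded over finite sets,
which yields summability of the rows as well. -/
lemma kernelPow_sum_le (hP : ∀ x y, 0 ≤ P x y) (hrow : ∀ x (T : Finset V), ∑ y ∈ T, P x y ≤ 1)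
    (n : ℕ) (x : V) (T : Finset V) : ∑ y ∈ T, kernelPow P n x y ≤ 1 := by
  induction n generalizing T with
  | zero =>
    simp only [kernelPow, Finset.sum_ite_eq]
    split_ifs <;> norm_num
  | succ n ih =>
    have hs : Summable (kernelPow P n x) :=
      summable_of_sum_le (fun z => kernelPow_nonneg hP n x z) ih
    have h1 : ∀ z y, P z y ≤ 1 := fun z y => by simpa using hrow z {y}
    have hs2 : ∀ y, Summable fun z => kernelPow P n x z * P z y := fun y =>
      hs.of_nonneg_of_le (fun z => mul_nonneg (kernelPow_nonneg hP n x z) (hP z y))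
        (fun z => mul_le_of_le_one_right (kernelPow_nonneg hP n x z) (h1 z y))
    calc ∑ y ∈ T, kernelPow P (n + 1) x y
        = ∑' z, ∑ y ∈ T, kernelPow P n x z * P z y :=
          (Summable.tsum_finsetSum fun y _ => hs2 y).symm
      _ ≤ ∑' z, kernelPow P n x z := by
          refine Summable.tsum_le_tsum (fun z => ?_) (summable_sum fun y _ => hs2 y) hs
          rw [← Finset.mul_sum]
          exact mul_le_of_le_one_right (kernelPow_nonneg hP n x z) (hrow z T)
      _ ≤ 1 := hs.tsum_le_of_sum_le ih

lemma kernelPow_le_one (hP : ∀ x y, 0 ≤ P x y)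
    (hrow : ∀ x (T : Finset V), ∑ y ∈ T, P x y ≤ 1) (n : ℕ) (x y : V) :
    kernelPow P n x y ≤ 1 := by
  simpa using kernelPow_sum_le hP hrow n x {y}

/-- The kernel `P` killed outside the finite set `F`. -/
noncomputable def truncKer (P : V → V → ℝ) (F : Finset V) (x y : V) : ℝ :=
  if x ∈ F ∧ y ∈ F then P x y else 0

lemma truncKer_nonneg (hP : ∀ x y, 0 ≤ P x y) (F : Finset V) (x y : V) :
    0 ≤ truncKer P F x y := by
  unfold truncKer; split_ifs
  exacts [hP x y, le_rfl]

lemma truncKer_le (hP : ∀ x y, 0 ≤ P x y) (F : Finset V) (x y : V) :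
    truncKer P F x y ≤ P x y := by
  unfold truncKer; split_ifs
  exacts [le_rfl, hP x y]

lemma summable_kernelPow_mul (hP : ∀ x y, 0 ≤ P x y)
    (hrow : ∀ x (T : Finset V), ∑ y ∈ T, P x y ≤ 1) (n : ℕ) (x y : V) :
    Summable fun z => kernelPow P n x z * P z y :=
  (summable_of_sum_le (fun z => kernelPow_nonneg hP n x z)
    (kernelPow_sum_le hP hrow n x)).of_nonneg_of_le
      (fun z => mul_nonneg (kernelPow_nonneg hP n x z) (hP z y))
      (fun z => mul_le_of_le_one_right (kernelPow_nonneg hP n x z) (by simpa using hrow z {y}))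

lemma kernelPow_trunc_le (hP : ∀ x y, 0 ≤ P x y)
    (hrow : ∀ x (T : Finset V), ∑ y ∈ T, P x y ≤ 1) (F : Finset V) (n : ℕ) (x y : V) :
    kernelPow (truncKer P F) n x y ≤ kernelPow P n x y := by
  induction n generalizing y with
  | zero => exact le_rfl
  | succ n ih =>
    have hle : ∀ z, kernelPow (truncKer P F) n x z * truncKer P F z y ≤
        kernelPow P n x z * P z y := fun z =>
      mul_le_mul (ih z) (truncKer_le hP F z y) (truncKer_nonneg hP F z y)
        (kernelPow_nonneg hP n x z)
    have hs := summable_kernelPow_mul hP hrow n x y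
    exact Summable.tsum_le_tsum hle (hs.of_nonneg_of_le (fun z => mul_nonneg
      (kernelPow_nonneg (truncKer_nonneg hP F) n x z) (truncKer_nonneg hP F z y)) hle) hs

/-- The iterates of the truncated kernels converge to those of `P` along the net of finite sets,
by dominated convergence. -/
lemma tendsto_kernelPow_trunc (hP : ∀ x y, 0 ≤ P x y)
    (hrow : ∀ x (T : Finset V), ∑ y ∈ T, P x y ≤ 1) (n : ℕ) (x y : V) :
    Filter.Tendsto (fun F => kernelPow (truncKer P F) n x y) Filter.atTop
      (nhds (kernelPow P n x y)) := by
  induction n generalizing y with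
  | zero => exact tendsto_const_nhds
  | succ n ih =>
    refine tendsto_tsum_of_dominated_convergence (summable_kernelPow_mul hP hrow n x y)
      (fun z => (ih z).mul ?_) (Filter.Eventually.of_forall fun F z => ?_)
    · refine tendsto_const_nhds.congr' ?_
      filter_upwards [Filter.eventually_ge_atTop ({z, y} : Finset V)] with F hF
      have hz : z ∈ F := hF (by simp)
      have hy : y ∈ F := hF (by simp)
      simp [truncKer, hz, hy]
    · rw [Real.norm_of_nonneg (mul_nonneg (kernelPow_nonneg (truncKer_nonneg hP F) n x z)
        (truncKer_nonneg hP F z y))]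
      exact mul_le_mul (kernelPow_trunc_le hP hrow F n x z) (truncKer_le hP F z y)
        (truncKer_nonneg hP F z y) (kernelPow_nonneg hP n x z)

/-- Inside `F`, iterates of the truncated kernel are powers of the finite matrix `P|_{F×F}`. -/
lemma kernelPow_trunc_eq (F : Finset V) (n : ℕ) (x y : F) :
    kernelPow (truncKer P F) n x y = ((Matrix.of fun a b : F => P a b) ^ n) x y := by
  induction n generalizing y with
  | zero =>
    rw [pow_zero, Matrix.one_apply]
    simp only [kernelPow, Subtype.ext_iff]
  | succ n ih =>
    rw [pow_succ, Matrix.mul_apply]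
    simp only [kernelPow]
    rw [tsum_eq_sum (s := F) (fun z hz => by simp [truncKer, hz]), ← Finset.sum_coe_sort]
    refine Finset.sum_congr rfl fun z _ => ?_
    rw [ih, truncKer, if_pos ⟨z.2, y.2⟩, Matrix.of_apply]

/-- Detailed balance for the iterates, inherited from the finite truncations. -/
lemma kernelPow_reversible (hP : ∀ x y, 0 ≤ P x y)
    (hrow : ∀ x (T : Finset V), ∑ y ∈ T, P x y ≤ 1) {θ : V → ℝ} (hθ : ∀ x, 0 < θ x)
    (hrev : ∀ x y, θ x * P x y = θ y * P y x) (n : ℕ) (x y : V) :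
    θ x * kernelPow P n x y = θ y * kernelPow P n y x := by
  refine tendsto_nhds_unique ((tendsto_kernelPow_trunc hP hrow n x y).const_mul (θ x))
    (((tendsto_kernelPow_trunc hP hrow n y x).const_mul (θ y)).congr' ?_)
  filter_upwards [Filter.eventually_ge_atTop ({x, y} : Finset V)] with F hF
  have hx : x ∈ F := hF (by simp)
  have hy : y ∈ F := hF (by simp)
  rw [kernelPow_trunc_eq F n ⟨x, hx⟩ ⟨y, hy⟩, kernelPow_trunc_eq F n ⟨y, hy⟩ ⟨x, hx⟩]
  exact (reversible_pow (Matrix.of fun a b : F => P a b) (fun a => θ a) (fun a => hθ a)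
    (fun a b => hrev a b) n ⟨x, hx⟩ ⟨y, hy⟩).symm

/-- Davies' bound on a countable state space, obtained from finite truncations. -/
lemma heatKer_le_davies (hP : ∀ x y, 0 ≤ P x y)
    (hrow : ∀ x (T : Finset V), ∑ y ∈ T, P x y ≤ 1) {θ φ : V → ℝ} (hθ : ∀ x, 0 < θ x)
    (hrev : ∀ x y, θ x * P x y = θ y * P y x)
    (hφ : ∀ x y, P x y ≠ 0 → |φ x - φ y| ≤ 1) (s : ℝ) {t : ℝ} (ht : 0 ≤ t) (x y : V) :
    heatKer P t x y ≤
      √(θ y) / √(θ x) * Real.exp (s * (φ x - φ y)) * Real.exp (t * (Real.cosh s - 1)) := by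
  have hpart : ∀ N, ∑ n ∈ Finset.range N, t ^ n / (n.factorial : ℝ) * kernelPow P n x y ≤
      √(θ y) / √(θ x) * Real.exp (s * (φ x - φ y)) * Real.exp (Real.cosh s * t) := by
    intro N
    refine le_of_tendsto (tendsto_finsetSum _ fun n _ =>
      (tendsto_kernelPow_trunc hP hrow n x y).const_mul _) ?_
    filter_upwards [Filter.eventually_ge_atTop ({x, y} : Finset V)] with F hF
    have hx : x ∈ F := hF (by simp)
    have hy : y ∈ F := hF (by simp)
    have h := davies_finite (Matrix.of fun a b : F => P a b) (fun a => θ a) (fun a => φ a) s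
      (fun a => hθ a) (fun a b => hP a b) (fun a b => hrev a b)
      (fun a => (Finset.sum_coe_sort F (P a)).trans_le (hrow a F))
      (fun a b hab => hφ a b hab) ht ⟨x, hx⟩ ⟨y, hy⟩ N
    simp only [← kernelPow_trunc_eq] at h
    exact h
  refine Real.tsum_le_of_sum_range_le
    (fun n => mul_nonneg (by positivity) (kernelPow_nonneg hP n x y)) fun N => ?_
  have hE : Real.exp (t * (Real.cosh s - 1)) = Real.exp (-t) * Real.exp (Real.cosh s * t) := by
    rw [← Real.exp_add]; ring_nf
  rw [hE]
  calc _ = Real.exp (-t) *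
        ∑ n ∈ Finset.range N, t ^ n / (n.factorial : ℝ) * kernelPow P n x y := by
        rw [Finset.mul_sum]
        exact Finset.sum_congr rfl fun n _ => by ring
    _ ≤ Real.exp (-t) * _ := mul_le_mul_of_nonneg_left (hpart N) (Real.exp_pos _).le
    _ = _ := by ring

lemma heatKer_reversible (hP : ∀ x y, 0 ≤ P x y)
    (hrow : ∀ x (T : Finset V), ∑ y ∈ T, P x y ≤ 1) {θ : V → ℝ} (hθ : ∀ x, 0 < θ x)
    (hrev : ∀ x y, θ x * P x y = θ y * P y x) (t : ℝ) (x y : V) :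
    heatKer P t x y / θ y = heatKer P t y x / θ x := by
  have h : θ x * heatKer P t x y = θ y * heatKer P t y x := by
    simp only [heatKer, ← tsum_mul_left]
    refine tsum_congr fun n => ?_
    have := kernelPow_reversible hP hrow hθ hrev n x y
    linear_combination (Real.exp (-t) * t ^ n / (n.factorial : ℝ)) * this
  have hx := (hθ x).ne'
  have hy := (hθ y).ne'
  field_simp
  linarith

/-- Chernoff bound: at least `d` jumps are needed to reach `y`, and `r^{n-d} ≥ 1` for `n ≥ d`. -/
lemma heatKer_le_chernoff (hP : ∀ x y, 0 ≤ P x y)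
    (hrow : ∀ x (T : Finset V), ∑ y ∈ T, P x y ≤ 1) {t r : ℝ} (ht : 0 ≤ t) (hr : 1 ≤ r)
    (d : ℕ) (x y : V) (hd : ∀ n, kernelPow P n x y ≠ 0 → d ≤ n) :
    heatKer P t x y ≤ Real.exp (-t + t * r) * r⁻¹ ^ d := by
  have hs : HasSum (fun n : ℕ => Real.exp (-t) * r⁻¹ ^ d * ((t * r) ^ n / (n.factorial : ℝ)))
      (Real.exp (-t) * r⁻¹ ^ d * Real.exp (t * r)) := by
    have := NormedSpace.expSeries_div_hasSum_exp (𝔸 := ℝ) (t * r)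
    rw [← Real.exp_eq_exp_ℝ] at this
    exact this.mul_left _
  have hle : ∀ n, Real.exp (-t) * t ^ n / (n.factorial : ℝ) * kernelPow P n x y ≤
      Real.exp (-t) * r⁻¹ ^ d * ((t * r) ^ n / (n.factorial : ℝ)) := by
    intro n
    rcases eq_or_ne (kernelPow P n x y) 0 with h0 | h0
    · rw [h0, mul_zero]; positivity
    · have h1 : 1 ≤ r⁻¹ ^ d * r ^ n := by
        rw [inv_pow, inv_mul_eq_div, one_le_div (by positivity)]
        exact pow_le_pow_right₀ hr (hd n h0)
      calc _ ≤ Real.exp (-t) * t ^ n / (n.factorial : ℝ) * (r⁻¹ ^ d * r ^ n) := by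
            gcongr
            exact (kernelPow_le_one hP hrow n x y).trans h1
        _ = _ := by rw [mul_pow]; ring
  have hnn : ∀ n, 0 ≤ Real.exp (-t) * t ^ n / (n.factorial : ℝ) * kernelPow P n x y :=
    fun n => mul_nonneg (by positivity) (kernelPow_nonneg hP n x y)
  calc heatKer P t x y ≤ Real.exp (-t) * r⁻¹ ^ d * Real.exp (t * r) :=
        (Summable.tsum_le_tsum hle (hs.summable.of_nonneg_of_le hnn hle) hs.summable).trans
          hs.tsum_eq.le
    _ = _ := by rw [Real.exp_add]; ring

end Kernel

/-! ### Optimization of the exponents -/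

/-- With `s = d / (2t)`, the Davies exponent `-sd + t (cosh s - 1)` is at most `-d²/(e²t)` as long
as `d ≤ et`: on this range `s²/2 ≤ 1`, and there `cosh s - 1 ≤ e^{s²/2} - 1 ≤ s²`. -/
lemma davies_exponent_le {d t : ℝ} (hd : 0 ≤ d) (ht : 0 < t) (hdt : d ≤ Real.exp 1 * t) :
    -(d / (2 * t)) * d + t * (Real.cosh (d / (2 * t)) - 1) ≤ -d ^ 2 / (Real.exp 1 ^ 2 * t) := by
  have he1 := Real.exp_one_lt_d9
  have he2 := Real.exp_one_gt_d9
  set s := d / (2 * t) with hs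
  have hds : d = 2 * t * s := by rw [hs]; field_simp
  have hs0 : 0 ≤ s := by positivity
  have hs1 : s ≤ 1.36 := by
    rw [hs, div_le_iff₀ (by positivity)]
    nlinarith
  have hv : |s ^ 2 / 2| ≤ 1 := by
    rw [abs_of_nonneg (by positivity)]; nlinarith
  have hc : Real.cosh s - 1 ≤ s ^ 2 := by
    have h1 := Real.cosh_le_exp_half_sq s
    have h2 := Real.abs_exp_sub_one_le hv
    have h3 := le_abs_self (Real.exp (s ^ 2 / 2) - 1)
    rw [abs_of_nonneg (by positivity : 0 ≤ s ^ 2 / 2)] at h2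
    linarith
  have hE : 4 ≤ Real.exp 1 ^ 2 := by nlinarith
  have hR : -d ^ 2 / (Real.exp 1 ^ 2 * t) = -(4 * t * s ^ 2 / Real.exp 1 ^ 2) := by
    rw [hds]; field_simp; ring
  have h4 : 4 * t * s ^ 2 / Real.exp 1 ^ 2 ≤ t * s ^ 2 := by
    rw [div_le_iff₀ (by positivity)]
    have : 0 ≤ t * s ^ 2 := by positivity
    nlinarith
  have h5 := mul_le_mul_of_nonneg_left hc ht.le
  rw [hR, hds]
  nlinarith

/-- With `L = log (d/t) ≥ 1`, the inequality reduces to `L - 1 + e^{-L} ≥ L/e`, which follows from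
the tangent bound `e^{-L} ≥ e^{-1} (2 - L)`. -/
lemma chernoff_le {d : ℕ} {t : ℝ} (hd : 1 ≤ d) (ht : 0 < t) (hdt : Real.exp 1 * t ≤ d) :
    Real.exp (-t + t * (d / t)) * ((d : ℝ) / t)⁻¹ ^ d ≤
      Real.exp (-Real.exp (-1) * d * max 1 (Real.log (d / t))) := by
  have hd0 : (0 : ℝ) < d := by exact_mod_cast hd
  have hr0 : 0 < (d : ℝ) / t := by positivity
  set L := Real.log ((d : ℝ) / t) with hL
  have hLe : Real.exp L = d / t := Real.exp_log hr0
  have hL1 : 1 ≤ L := by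
    rw [hL, Real.le_log_iff_exp_le hr0, le_div_iff₀ ht]; exact hdt
  have hpow : ((d : ℝ) / t)⁻¹ ^ d = Real.exp (-(d * L)) := by
    rw [← hLe, ← Real.exp_neg, ← Real.exp_nat_mul]; ring_nf
  have htd : t * (d / t) = d := by field_simp
  have htL : t = d * Real.exp (-L) := by
    rw [Real.exp_neg, hLe]; field_simp
  rw [hpow, ← Real.exp_add, max_eq_right hL1, htd, Real.exp_le_exp]
  have hq : Real.exp (-1) * (2 - L) ≤ Real.exp (-L) := by
    have h := Real.add_one_le_exp (1 - L)
    have h2 : Real.exp (-L) = Real.exp (-1) * Real.exp (1 - L) := by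
      rw [← Real.exp_add]; ring_nf
    rw [h2]
    exact mul_le_mul_of_nonneg_left (by linarith) (Real.exp_pos _).le
  have hq2 : Real.exp (-1) ≤ 1 / 2 := by
    rw [Real.exp_neg, inv_le_comm₀ (Real.exp_pos _) (by norm_num)]
    have := Real.exp_one_gt_d9
    norm_num; linarith
  have key : 1 - L - Real.exp (-L) + Real.exp (-1) * L ≤ 0 := by nlinarith
  nlinarith

/-! ### The two regimes -/

/-- Carne–Varopoulos bound for the continuous-time walk `Y` with generator
`L^ω_θ f(x) = θ(x)⁻¹ ∑ ω(x,y)(f(y)-f(x))` on a countable connected weighted graph, with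
speed measure `θ ≥ μ^ω`: there is `c > 0` such that for all `x, y` with `d^ω(x,y) ≥ 1`
and `t > 0`, if `et ≥ d^ω(x,y)` then
`P_x[Y_t=y]/θ(y) ≤ (4/√(θ(x)θ(y))) exp(-d^ω(x,y)²/(e²t))`, and if `et ≤ d^ω(x,y)` then
`P_x[Y_t=y]/θ(y) ≤ (θ(x) ∨ θ(y))⁻¹ exp(-c d^ω(x,y)(1 ∨ log(d^ω(x,y)/t)))`. -/
theorem carne_varopoulos_speed_measure {V : Type*} [Countable V]
    (ω : V → V → ℝ) (hsymm : ∀ x y, ω x y = ω y x) (hnn : ∀ x y, 0 ≤ ω x y)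
    (μ : V → ℝ) (hμ : ∀ x, HasSum (fun y => ω x y) (μ x))
    (θ : V → ℝ) (hθpos : ∀ x, 0 < θ x) (hθμ : ∀ x, μ x ≤ θ x)
    (G : SimpleGraph V) (hAdj : ∀ x y, G.Adj x y ↔ x ≠ y ∧ 0 < ω x y)
    (hconn : G.Preconnected)
    (P : V → V → ℝ)
    (hP : ∀ x y, P x y = if x = y then 1 - μ x / θ x else ω x y / θ x) :
    ∃ c > (0 : ℝ), ∀ x y : V, 1 ≤ G.dist x y → ∀ t : ℝ, 0 < t →
      ((G.dist x y : ℝ) ≤ Real.exp 1 * t →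
        heatKer P t x y / θ y ≤
          4 / Real.sqrt (θ x * θ y) *
            Real.exp (-(G.dist x y : ℝ) ^ 2 / (Real.exp 1 ^ 2 * t))) ∧
      (Real.exp 1 * t ≤ (G.dist x y : ℝ) →
        heatKer P t x y / θ y ≤
          (1 / max (θ x) (θ y)) *
            Real.exp (-c * (G.dist x y : ℝ) *
              max 1 (Real.log ((G.dist x y : ℝ) / t)))) := by
  have hPnn : ∀ x y, 0 ≤ P x y := by
    intro x y
    rw [hP]
    split_ifs
    · rw [sub_nonneg, div_le_one (hθpos x)]; exact hθμ x
    · exact div_nonneg (hnn x y) (hθpos x).le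
  -- A positive self-conductance `ω x x` only makes `P` substochastic, hence an inequality.
  have hrow : ∀ x (T : Finset V), ∑ y ∈ T, P x y ≤ 1 := by
    intro x T
    have hle : ∑ y ∈ insert x T, P x y ≤ 1 := by
      have h1 : ∑ y ∈ (insert x T).erase x, P x y =
          (∑ y ∈ (insert x T).erase x, ω x y) / θ x := by
        rw [Finset.sum_div]
        refine Finset.sum_congr rfl fun y hy => ?_
        rw [hP, if_neg (Finset.ne_of_mem_erase hy).symm]
      have h2 := sum_le_hasSum ((insert x T).erase x) (fun y _ => hnn x y) (hμ x)
      have h3 : (∑ y ∈ (insert x T).erase x, ω x y) / θ x ≤ μ x / θ x :=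
        div_le_div_of_nonneg_right h2 (hθpos x).le
      rw [← Finset.add_sum_erase _ _ (Finset.mem_insert_self x T), h1, hP, if_pos rfl]
      linarith
    exact (Finset.sum_le_sum_of_subset_of_nonneg (Finset.subset_insert x T)
      fun y _ _ => hPnn x y).trans hle
  have hrev : ∀ x y, θ x * P x y = θ y * P y x := by
    intro x y
    rcases eq_or_ne x y with rfl | hxy
    · rfl
    · rw [hP, hP, if_neg hxy, if_neg hxy.symm, mul_div_cancel₀ _ (hθpos x).ne',
        mul_div_cancel₀ _ (hθpos y).ne', hsymm]
  have htri : ∀ x y z, G.dist x z ≤ G.dist x y + G.dist y z := fun x y z =>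
    haveI : Nonempty V := ⟨x⟩
    (SimpleGraph.Connected.mk hconn).dist_triangle
  have hstep : ∀ y z, P y z ≠ 0 → G.dist y z ≤ 1 := by
    intro y z h
    rcases eq_or_ne y z with rfl | hyz
    · simp
    · rw [hP, if_neg hyz] at h
      have : 0 < ω y z := lt_of_le_of_ne (hnn y z) fun h0 => h (by rw [← h0, zero_div])
      exact (SimpleGraph.dist_eq_one_iff_adj.2 ((hAdj y z).2 ⟨hyz, this⟩)).le
  have hrange : ∀ n x y, kernelPow P n x y ≠ 0 → G.dist x y ≤ n := by
    intro n x
    induction n with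
    | zero =>
      intro y h
      rcases eq_or_ne x y with rfl | hxy
      · simp
      · simp [kernelPow, hxy] at h
    | succ n ih =>
      intro y h
      obtain ⟨z, hz⟩ : ∃ z, kernelPow P n x z * P z y ≠ 0 := by
        by_contra! h0
        exact h (by simp [kernelPow, h0])
      have h1 := ih z (left_ne_zero_of_mul hz)
      have h2 := hstep z y (right_ne_zero_of_mul hz)
      have h3 := htri x z y
      omega
  refine ⟨Real.exp (-1), Real.exp_pos _, fun x y hd t ht => ⟨fun hdt => ?_, fun hdt => ?_⟩⟩
  · have hφ : ∀ u v, P u v ≠ 0 → |(G.dist x u : ℝ) - G.dist x v| ≤ 1 := by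
      intro u v h
      have h1 := hstep u v h
      have h2 := htri x u v
      have h3 := htri x v u
      rw [SimpleGraph.dist_comm (u := v) (v := u)] at h3
      have h4 : (G.dist x v : ℝ) ≤ G.dist x u + 1 := by exact_mod_cast (by omega)
      have h5 : (G.dist x u : ℝ) ≤ G.dist x v + 1 := by exact_mod_cast (by omega)
      rw [abs_le]
      constructor <;> linarith
    have h := heatKer_le_davies hPnn hrow hθpos hrev hφ ((G.dist x y : ℝ) / (2 * t)) ht.le x y
    have hexp := davies_exponent_le (Nat.cast_nonneg (G.dist x y)) ht hdt
    rw [mul_assoc, ← Real.exp_add, SimpleGraph.dist_self, Nat.cast_zero, zero_sub, mul_neg,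
      ← neg_mul] at h
    have hx := Real.sqrt_pos.2 (hθpos x)
    have hy := Real.sqrt_pos.2 (hθpos y)
    have hyy : θ y = √(θ y) * √(θ y) := (Real.mul_self_sqrt (hθpos y).le).symm
    rw [Real.sqrt_mul (hθpos x).le, div_le_iff₀ (hθpos y)]
    refine h.trans ((mul_le_mul_of_nonneg_left (Real.exp_le_exp.2 hexp)
      (by positivity)).trans ?_)
    have hconst : √(θ y) / √(θ x) ≤ 4 / (√(θ x) * √(θ y)) * θ y := by
      have : 4 / (√(θ x) * √(θ y)) * θ y = 4 * (√(θ y) / √(θ x)) := by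
        nth_rewrite 2 [hyy]
        field_simp
      rw [this]
      have : 0 ≤ √(θ y) / √(θ x) := by positivity
      linarith
    calc _ ≤ 4 / (√(θ x) * √(θ y)) * θ y * _ :=
          mul_le_mul_of_nonneg_right hconst (Real.exp_pos _).le
      _ = _ := by ring
  · have hd0 : (0 : ℝ) < G.dist x y := by exact_mod_cast hd
    have hr : 1 ≤ (G.dist x y : ℝ) / t := by
      rw [one_le_div ht]
      have := Real.add_one_le_exp (1 : ℝ)
      nlinarith
    have hQ := chernoff_le hd ht hdt
    have h1 := (heatKer_le_chernoff hPnn hrow ht.le hr (G.dist x y) x y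
      (fun n => hrange n x y)).trans hQ
    have h2 := (heatKer_le_chernoff hPnn hrow ht.le hr (G.dist x y) y x
      (fun n hn => by rw [SimpleGraph.dist_comm]; exact hrange n y x hn)).trans hQ
    rw [one_div, inv_mul_eq_div]
    -- By reversibility the bound may be divided by either of `θ x`, `θ y`.
    rcases max_choice (θ x) (θ y) with h | h <;> rw [h]
    · rw [heatKer_reversible hPnn hrow hθpos hrev]
      exact div_le_div_of_nonneg_right h2 (hθpos x).le
    · exact div_le_div_of_nonneg_right h1 (hθpos y).le
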